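/- Every congruence on the five-element subalgebra {⊥, t, a, f, ⊤} of the crystal lattice C (with the operations ∧, ∨, ¬, · inherited from C) that relates a and t is the full relation, and every congruence on this subalgebra that relates a and ⊤ is the full relation. -/

import Mathlib

/-- The universe of the crystal lattice `C`: six elements `⊥, t, a, b, f, ⊤`. -/
inductive Cry : Type
  | bot | t | a | b | f | top
  deriving DecidableEq

namespace Cry

/-- The lattice order of `C`: `⊥ < t < a < f < ⊤` and `t < b < f`, with `a, b` incomparable. -/
def leb : Cry → Cry → Bool
  | bot, _ => true
  | _, top => true
  | t, bot => false
  | t, _ => true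
  | a, a => true
  | a, f => true
  | a, _ => false
  | b, b => true
  | b, f => true
  | b, _ => false
  | f, f => true
  | f, _ => false
  | top, _ => false

/-- Meet: the only incomparable pair is `{a, b}`, whose meet is `t`. -/
def meet (x y : Cry) : Cry := if leb x y then x else if leb y x then y else t

/-- Join: the only incomparable pair is `{a, b}`, whose join is `f`. -/
def join (x y : Cry) : Cry := if leb x y then y else if leb y x then x else f

/-- The involution `¬`. -/
def neg : Cry → Cry
  | bot => top
  | t => f
  | a => a
  | b => b
  | f => t
  | top => bot

/-- Fusion `·`: commutative with identity `t`; `⊥·x = ⊥`; `⊤·x = ⊤` for `x ≠ ⊥`;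
`a·a = a`; `b·b = b`; and `a·b = a·f = b·f = f·f = ⊤`. -/
def fus : Cry → Cry → Cry
  | bot, _ => bot
  | _, bot => bot
  | top, _ => top
  | _, top => top
  | t, x => x
  | x, t => x
  | a, a => a
  | b, b => b
  | _, _ => top

/-- A subalgebra of `C`: a nonempty subset closed under `∧`, `∨`, `·`, and `¬`. -/
def IsSubalg (S : Set Cry) : Prop :=
  S.Nonempty ∧
  (∀ x ∈ S, ∀ y ∈ S, meet x y ∈ S ∧ join x y ∈ S ∧ fus x y ∈ S) ∧
  (∀ x ∈ S, neg x ∈ S)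

/-- A congruence on the subset `S` (with the operations inherited from `C`):
an equivalence relation on `S` compatible with `∧`, `∨`, `·`, and `¬`. -/
def IsCongOn (S : Set Cry) (r : Cry → Cry → Prop) : Prop :=
  (∀ x ∈ S, r x x) ∧
  (∀ x ∈ S, ∀ y ∈ S, r x y → r y x) ∧
  (∀ x ∈ S, ∀ y ∈ S, ∀ z ∈ S, r x y → r y z → r x z) ∧
  (∀ x ∈ S, ∀ y ∈ S, ∀ u ∈ S, ∀ v ∈ S, r x y → r u v →
      r (meet x u) (meet y v) ∧ r (join x u) (join y v) ∧ r (fus x u) (fus y v)) ∧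
  (∀ x ∈ S, ∀ y ∈ S, r x y → r (neg x) (neg y))

end Cry

/-!
A congruence relating `⊥` and `⊤` is full, because `x = x ∧ ⊤` is then related to `x ∧ ⊥ = ⊥`.
Let `c` be a fixed point of `¬`. If `c` is related to `⊤`, negation relates it to `⊥` as well, so
`⊥` and `⊤` are related. If `c` is related to `t`, negation relates it to `f`, and fusing with `c`
relates `c = c · c` to `c · f = ⊤`.
-/

namespace Cry

theorem meet_bot (x : Cry) : meet x bot = bot := by cases x <;> rfl

theorem meet_top (x : Cry) : meet x top = x := by cases x <;> rfl

theorem fus_self_of_neg_eq_self {c : Cry} (hc : neg c = c) : fus c c = c := by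
  cases c <;> first | rfl | cases hc

theorem fus_f_of_neg_eq_self {c : Cry} (hc : neg c = c) : fus c f = top := by
  cases c <;> first | rfl | cases hc

theorem isSubalg_bot_t_a_f_top : IsSubalg {bot, t, a, f, top} := by
  refine ⟨⟨a, by simp⟩, ?_, ?_⟩
  · rintro x (rfl | rfl | rfl | rfl | rfl) y (rfl | rfl | rfl | rfl | rfl) <;>
      simp [meet, join, fus, leb]
  · rintro x (rfl | rfl | rfl | rfl | rfl) <;> simp [neg]

variable {S : Set Cry} {r : Cry → Cry → Prop} {x y z u v c : Cry}

namespace IsSubalg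

theorem neg_mem (hS : IsSubalg S) (hx : x ∈ S) : neg x ∈ S := hS.2.2 x hx

theorem fus_mem (hS : IsSubalg S) (hx : x ∈ S) (hy : y ∈ S) : fus x y ∈ S :=
  (hS.2.1 x hx y hy).2.2

end IsSubalg

namespace IsCongOn

theorem refl (h : IsCongOn S r) (hx : x ∈ S) : r x x := h.1 x hx

theorem symm (h : IsCongOn S r) (hx : x ∈ S) (hy : y ∈ S) (hxy : r x y) : r y x :=
  h.2.1 x hx y hy hxy

theorem trans (h : IsCongOn S r) (hx : x ∈ S) (hy : y ∈ S) (hz : z ∈ S)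
    (hxy : r x y) (hyz : r y z) : r x z :=
  h.2.2.1 x hx y hy z hz hxy hyz

theorem meet (h : IsCongOn S r) (hx : x ∈ S) (hy : y ∈ S) (hu : u ∈ S) (hv : v ∈ S)
    (hxy : r x y) (huv : r u v) : r (Cry.meet x u) (Cry.meet y v) :=
  (h.2.2.2.1 x hx y hy u hu v hv hxy huv).1

theorem fus (h : IsCongOn S r) (hx : x ∈ S) (hy : y ∈ S) (hu : u ∈ S) (hv : v ∈ S)
    (hxy : r x y) (huv : r u v) : r (Cry.fus x u) (Cry.fus y v) :=
  (h.2.2.2.1 x hx y hy u hu v hv hxy huv).2.2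

theorem neg (h : IsCongOn S r) (hx : x ∈ S) (hy : y ∈ S) (hxy : r x y) :
    r (Cry.neg x) (Cry.neg y) :=
  h.2.2.2.2 x hx y hy hxy

theorem rel_of_rel_top_bot (h : IsCongOn S r) (hbot : bot ∈ S) (htop : top ∈ S)
    (htb : r top bot) (hx : x ∈ S) (hy : y ∈ S) : r x y := by
  have rel_bot {w : Cry} (hw : w ∈ S) : r w bot := by
    simpa only [meet_top, meet_bot] using h.meet hw hw htop hbot (h.refl hw) htb
  exact h.trans hx hbot hy (rel_bot hx) (h.symm hy hbot (rel_bot hy))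

theorem rel_top_bot_of_rel_top (h : IsCongOn S r) (hbot : bot ∈ S) (htop : top ∈ S) (hcS : c ∈ S)
    (hc : Cry.neg c = c) (hct : r c top) : r top bot := by
  have hcb : r c bot := by
    rw [← hc]
    exact h.neg hcS htop hct
  exact h.trans htop hcS hbot (h.symm hcS htop hct) hcb

theorem rel_top_of_rel_t (h : IsCongOn S r) (ht : t ∈ S) (hf : f ∈ S) (hcS : c ∈ S)
    (hc : Cry.neg c = c) (hct : r c t) : r c top := by
  have hcf : r c f := by
    rw [← hc]
    exact h.neg hcS ht hct
  simpa only [fus_self_of_neg_eq_self hc, fus_f_of_neg_eq_self hc] using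
    h.fus hcS hcS hcS hf (h.refl hcS) hcf

end IsCongOn

end Cry

theorem cong_a_collapse_general {S : Set Cry} {r : Cry → Cry → Prop} {c : Cry}
    (hS : Cry.IsSubalg S) (hcong : Cry.IsCongOn S r) (hcS : c ∈ S) (hc : Cry.neg c = c) :
    (Cry.t ∈ S → r c Cry.t → ∀ x ∈ S, ∀ y ∈ S, r x y) ∧
    (Cry.top ∈ S → r c Cry.top → ∀ x ∈ S, ∀ y ∈ S, r x y) := by
  have full_of_rel_top (htop : Cry.top ∈ S) (hct : r c Cry.top) : ∀ x ∈ S, ∀ y ∈ S, r x y := by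
    have hbot : Cry.bot ∈ S := hS.neg_mem htop
    have htb : r Cry.top Cry.bot := hcong.rel_top_bot_of_rel_top hbot htop hcS hc hct
    exact fun x hx y hy => hcong.rel_of_rel_top_bot hbot htop htb hx hy
  refine ⟨fun ht hct => ?_, full_of_rel_top⟩
  have hf : Cry.f ∈ S := hS.neg_mem ht
  have htop : Cry.top ∈ S := Cry.fus_f_of_neg_eq_self hc ▸ hS.fus_mem hcS hf
  exact full_of_rel_top htop (hcong.rel_top_of_rel_t ht hf hcS hc hct)

/-- On the subalgebra `{⊥, t, a, f, ⊤}` of `C`, any congruence relating `a` and `t`,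
or relating `a` and `⊤`, is the full relation. -/
theorem cong_a_collapse (r : Cry → Cry → Prop)
    (hcong : Cry.IsCongOn {Cry.bot, Cry.t, Cry.a, Cry.f, Cry.top} r) :
    (r Cry.a Cry.t →
      ∀ x ∈ ({Cry.bot, Cry.t, Cry.a, Cry.f, Cry.top} : Set Cry),
        ∀ y ∈ ({Cry.bot, Cry.t, Cry.a, Cry.f, Cry.top} : Set Cry), r x y) ∧
    (r Cry.a Cry.top →
      ∀ x ∈ ({Cry.bot, Cry.t, Cry.a, Cry.f, Cry.top} : Set Cry),
        ∀ y ∈ ({Cry.bot, Cry.t, Cry.a, Cry.f, Cry.top} : Set Cry), r x y) := by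
  have h := cong_a_collapse_general Cry.isSubalg_bot_t_a_f_top hcong (c := Cry.a) (by simp) rfl
  exact ⟨h.1 (by simp), h.2 (by simp)⟩
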